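/- Let n ≥ 2 and ℓ ≥ 2. In the group G₁ = ⟨x, y, z | x^{2^n} = 1, y² = 1, z² = 1 (ℓ = 1 here: take the relations x^{2^n}=1, y²=1, z²=1, [y,x]=z, [z,x]=1, [z,y]=1)⟩ — formally, G₁ = G_⚀(n,1,1) — there exists a maximal subgroup isomorphic to C_{2^{n-1}} × C_2 × C_2, whereas in G₂ = G_⚁(n,1,1) with relations x^{2^n}=1, y²=x², z²=1, [y,x]=z, [z,x]=1, [z,y]=1, every maximal subgroup is two-generated. In particular G_⚀(n,1,1) ≇ G_⚁(n,1,1). -/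

import Mathlib

open FreeGroup in
/-- Relators of G_⚀(n,1,1) = ⟨x,y,z | x^{2^n} = 1, y² = 1, z² = 1, [y,x] = z, z central⟩
(convention [y,x] = y⁻¹x⁻¹yx; generators 0 ↦ x, 1 ↦ y, 2 ↦ z). -/
def relsGA (n : ℕ) : Set (FreeGroup (Fin 3)) :=
  { (of 0) ^ (2 ^ n), (of 1) ^ 2, (of 2) ^ 2,
    (of 1)⁻¹ * (of 0)⁻¹ * of 1 * of 0 * (of 2)⁻¹,
    (of 2)⁻¹ * (of 0)⁻¹ * of 2 * of 0,
    (of 2)⁻¹ * (of 1)⁻¹ * of 2 * of 1 }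

open FreeGroup in
/-- Relators of G_⚁(n,1,1) = ⟨x,y,z | x^{2^n} = 1, y² = x², z² = 1, [y,x] = z, z central⟩
(generators 0 ↦ x, 1 ↦ y, 2 ↦ z). -/
def relsGB (n : ℕ) : Set (FreeGroup (Fin 3)) :=
  { (of 0) ^ (2 ^ n), (of 1) ^ 2 * ((of 0) ^ 2)⁻¹, (of 2) ^ 2,
    (of 1)⁻¹ * (of 0)⁻¹ * of 1 * of 0 * (of 2)⁻¹,
    (of 2)⁻¹ * (of 0)⁻¹ * of 2 * of 0,
    (of 2)⁻¹ * (of 1)⁻¹ * of 2 * of 1 }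

abbrev GA (n : ℕ) := PresentedGroup (relsGA n)
abbrev GB (n : ℕ) := PresentedGroup (relsGB n)

/-! In a nilpotent group generated by elements of `2`-power order every maximal subgroup has index
`2`. If `G = ⟨a, b⟩` and `M` has index `2` with `a ∈ M`, `b ∉ M`, then Reidemeister-Schreier gives
`M = ⟨a, bab⁻¹, b²⟩`. In `G_⚁` the relation `y² = x²` always makes one of the three generators
redundant: this is clear when `M` contains `x` or `y`, and otherwise `a = xy`, `b = x` satisfy
`bab⁻¹ = a⁻¹b⁴`. In `G_⚀` the index-`2` subgroup containing `y` but not `x` is the abelian group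
`⟨x², y, z⟩`. Maps to cyclic groups show that it is the direct product of its three cyclic factors,
and a map onto the dihedral group of order `8` shows that `z ≠ 1`. Finally
`C_{2^{n-1}} × C_2 × C_2` surjects onto `C_2³`, which is not two-generated.
-/

section

open Subgroup
open scoped commutatorElement

variable {G : Type*} [Group G]

theorem isCoatom_of_prime_index {H : Subgroup G} (hH : H.index.Prime) : IsCoatom H := by
  refine ⟨fun h => hH.ne_one (index_eq_one.2 h), fun K hK => ?_⟩
  refine index_eq_one.1 <| (hH.eq_one_or_self_of_dvd _ (index_dvd_of_le hK.le)).resolve_right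
    fun h => hK.not_ge ?_
  have hmul := relIndex_mul_index hK.le
  rw [h] at hmul
  exact relIndex_eq_one.1 (Nat.eq_of_mul_eq_mul_right hH.pos (by rw [hmul, one_mul]))

theorem isSimpleGroup_quotient_of_isCoatom {M : Subgroup G} [M.Normal] (hM : IsCoatom M) :
    IsSimpleGroup (G ⧸ M) := by
  have : IsSimpleOrder (Set.Ici M) := Set.isSimpleOrder_Ici_iff_isCoatom.2 hM
  have e : Subgroup (G ⧸ M) ≃o Set.Ici M := QuotientGroup.comapMk'OrderIso M
  have : IsSimpleOrder (Subgroup (G ⧸ M)) := e.isSimpleOrder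
  have : Nontrivial (G ⧸ M) := nontrivial_iff.1 inferInstance
  exact ⟨fun H _ => eq_bot_or_eq_top H⟩

theorem isNilpotent_of_commutatorElement_mem_center {x y : G} (hgen : closure {x, y} = ⊤)
    (hxy : ⁅x, y⁆ ∈ center G) : Group.IsNilpotent G := by
  set π := QuotientGroup.mk' (center G)
  have hcomm : Commute (π x) (π y) := by
    rwa [← commutatorElement_eq_one_iff_commute, ← map_commutatorElement, ← MonoidHom.mem_ker,
      QuotientGroup.ker_mk']
  have hgen' : closure {π x, π y} = ⊤ := by
    rw [← Set.image_pair, ← MonoidHom.map_closure, hgen,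
      map_top_of_surjective π (QuotientGroup.mk'_surjective _)]
  have hmul : ∀ a ∈ ({π x, π y} : Set (G ⧸ center G)), ∀ b ∈ ({π x, π y} : Set (G ⧸ center G)),
      a * b = b * a := by
    rintro _ (rfl | rfl) _ (rfl | rfl)
    exacts [rfl, hcomm, hcomm.symm, rfl]
  have := isMulCommutative_closure hmul
  rw [hgen'] at this
  have : IsMulCommutative (G ⧸ center G) := ⟨⟨fun a b =>
    congrArg Subtype.val (this.is_comm.comm ⟨a, mem_top a⟩ ⟨b, mem_top b⟩)⟩⟩
  apply Group.of_quotient_center_nilpotent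
  open scoped IsMulCommutative in
  infer_instance

theorem index_eq_of_isCoatom [Group.IsNilpotent G] {p : ℕ} [Fact p.Prime] {S : Set G}
    (hS : closure S = ⊤) (hp : ∀ s ∈ S, ∃ k, s ^ p ^ k = 1) {M : Subgroup G} (hM : IsCoatom M) :
    M.index = p := by
  have : M.Normal := Group.normalizerCondition_of_isNilpotent.normal_of_coatom M hM
  have : IsSimpleGroup (G ⧸ M) := isSimpleGroup_quotient_of_isCoatom hM
  have hprime : (Nat.card (G ⧸ M)).Prime := IsSimpleGroup.prime_card
  obtain ⟨s, hs, hsM⟩ : ∃ s ∈ S, s ∉ M := by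
    by_contra! h
    exact hM.1 (top_le_iff.1 (hS ▸ (closure_le M).2 h))
  obtain ⟨k, hk⟩ := hp s hs
  have hdvd : orderOf (s : G ⧸ M) ∣ p ^ k :=
    orderOf_dvd_of_pow_eq_one (by rw [← QuotientGroup.mk_pow, hk, QuotientGroup.mk_one])
  have hcard : orderOf (s : G ⧸ M) = Nat.card (G ⧸ M) :=
    (hprime.eq_one_or_self_of_dvd _ (orderOf_dvd_natCard _)).resolve_left fun h =>
      hsM ((QuotientGroup.eq_one_iff s).1 (orderOf_eq_one_iff.1 h))
  rw [hcard] at hdvd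
  exact (Nat.prime_dvd_prime_iff_eq hprime Fact.out).1 (hprime.dvd_of_dvd_pow hdvd)

-- Reidemeister-Schreier for the transversal `{1, b}`.
theorem eq_closure_of_index_two {a b : G} (hgen : closure {a, b} = ⊤) {M : Subgroup G}
    (hM : M.index = 2) (ha : a ∈ M) (hb : b ∉ M) : M = closure {a, b * a * b⁻¹, b ^ 2} := by
  have : M.Normal := normal_of_index_eq_two hM
  set N := closure {a, b * a * b⁻¹, b ^ 2}
  have haN : a ∈ N := subset_closure (by simp)
  have hconj : b * a * b⁻¹ ∈ N := subset_closure (by simp)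
  have hsq : b ^ 2 ∈ N := subset_closure (by simp)
  have hNM : N ≤ M := by
    rw [closure_le]
    rintro _ (rfl | rfl | rfl)
    exacts [ha, this.conj_mem _ ha b, sq_mem_of_index_two hM b]
  have hcover : ∀ g : G, g ∈ N ∨ b * g ∈ N := by
    intro g
    have hg : g ∈ closure {a, b} := hgen ▸ mem_top g
    induction hg using closure_induction_left with
    | one => exact .inl N.one_mem
    | mul_left s hs g _ ih =>
      rcases hs with rfl | rfl
      · refine ih.imp (N.mul_mem haN) fun h => ?_
        simpa [mul_assoc] using N.mul_mem hconj h
      · refine ih.symm.imp id fun h => ?_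
        simpa [pow_two, mul_assoc] using N.mul_mem hsq h
    | inv_mul_cancel s hs g _ ih =>
      rcases hs with rfl | rfl
      · refine ih.imp (N.mul_mem (N.inv_mem haN)) fun h => ?_
        simpa [mul_assoc] using N.mul_mem (N.inv_mem hconj) h
      · refine ih.symm.imp (fun h => ?_) fun h => by simpa using h
        simpa [pow_two, mul_assoc] using N.mul_mem (N.inv_mem hsq) h
  refine le_antisymm (fun g hg => ?_) hNM
  exact (hcover g).resolve_right fun h => hb ((M.mul_mem_cancel_right hg).1 (hNM h))

theorem eq_closure_pair_of_index_two {a b : G} (hgen : closure {a, b} = ⊤) (hsq : b ^ 2 = a ^ 2)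
    {M : Subgroup G} (hM : M.index = 2) (ha : a ∈ M) (hb : b ∉ M) :
    M = closure {a, b * a * b⁻¹} := by
  have hb2 : b ^ 2 ∈ closure {a, b * a * b⁻¹} :=
    hsq ▸ pow_mem (subset_closure (Set.mem_insert _ _)) 2
  rw [eq_closure_of_index_two hgen hM ha hb]
  refine le_antisymm ((closure_le _).2 ?_) (closure_mono ?_)
  · rintro _ (rfl | rfl | rfl)
    exacts [subset_closure (by simp), subset_closure (by simp), hb2]
  · exact Set.insert_subset_insert (by simp)

theorem exists_eq_closure_pair_of_index_two {x y : G} (hgen : closure {x, y} = ⊤)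
    (hsq : y ^ 2 = x ^ 2) {M : Subgroup G} (hM : M.index = 2) :
    ∃ u v : G, M = closure {u, v} := by
  by_cases hx : x ∈ M <;> by_cases hy : y ∈ M
  · have htop : M = ⊤ := top_le_iff.1 <| hgen ▸ (closure_le M).2 (Set.pair_subset hx hy)
    simp [htop] at hM
  · exact ⟨_, _, eq_closure_pair_of_index_two hgen hsq hM hx hy⟩
  · exact ⟨_, _, eq_closure_pair_of_index_two (Set.pair_comm x y ▸ hgen) hsq.symm hM hy hx⟩
  · have hxy : x * y ∈ M := (mul_mem_iff_of_index_two hM).2 (iff_of_false hx hy)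
    have hgen' : closure {x * y, x} = ⊤ := by
      rw [← top_le_iff, ← hgen, closure_le]
      have hx' : x ∈ closure {x * y, x} := subset_closure (by simp)
      refine Set.pair_subset hx' ?_
      simpa using mul_mem (inv_mem hx') (subset_closure (Set.mem_insert (x * y) _))
    have hconj : x * (x * y) * x⁻¹ = (x * y)⁻¹ * (x ^ 2) ^ 2 := by
      rw [eq_inv_mul_iff_mul_eq]
      calc x * y * (x * (x * y) * x⁻¹) = x * y * x ^ 2 * y * x⁻¹ := by
            simp only [pow_two, mul_assoc]
        _ = x * (y ^ 2) ^ 2 * x⁻¹ := by rw [← hsq]; group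
        _ = (x ^ 2) ^ 2 := by rw [hsq]; group
    refine ⟨x * y, x ^ 2, ?_⟩
    rw [eq_closure_of_index_two hgen' hM hxy hx, hconj]
    refine le_antisymm ((closure_le _).2 ?_) (closure_mono (by simp [Set.insert_subset_iff]))
    have hxy' : x * y ∈ closure {x * y, x ^ 2} := subset_closure (by simp)
    have hx2 : x ^ 2 ∈ closure {x * y, x ^ 2} := subset_closure (by simp)
    rintro _ (rfl | rfl | rfl)
    exacts [hxy', mul_mem (inv_mem hxy') (pow_mem hx2 2), hx2]

theorem index_ker_eq_of_ne_one {p : ℕ} [Fact p.Prime] {f : G →* Multiplicative (ZMod p)} {g : G}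
    (hg : f g ≠ 1) : f.ker.index = p := by
  have hp : Nat.card (Multiplicative (ZMod p)) = p := Nat.card_zmod p
  have : Fact (Nat.card (Multiplicative (ZMod p))).Prime := ⟨hp.symm ▸ Fact.out⟩
  have hrange : f.range = ⊤ := (eq_bot_or_eq_top_of_prime_card f.range).resolve_left fun h =>
    hg (mem_bot.1 (h ▸ ⟨g, rfl⟩))
  rw [index_ker, hrange, card_top, hp]

theorem disjoint_zpowers_ker {H : Type*} [Group H] {f : G →* H} {g : G}
    (h : orderOf g ∣ orderOf (f g)) : Disjoint (zpowers g) f.ker := by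
  rw [disjoint_def]
  rintro _ ⟨k, rfl⟩ hk
  rw [MonoidHom.mem_ker, map_zpow, ← orderOf_dvd_iff_zpow_eq_one] at hk
  exact orderOf_dvd_iff_zpow_eq_one.1 ((Int.natCast_dvd_natCast.2 h).trans hk)

theorem nonempty_sup_mulEquiv_prod {H K : Subgroup G} (hcomm : H ≤ centralizer K)
    (hdisj : Disjoint H K) : Nonempty (↥(H ⊔ K) ≃* H × K) := by
  have hHK : ∀ (h : H) (k : K), Commute (H.subtype h) (K.subtype k) := fun h k =>
    (mem_centralizer_iff.1 (hcomm h.2) k k.2).symm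
  set φ := H.subtype.noncommCoprod K.subtype hHK
  have hinj : Function.Injective φ := (MonoidHom.noncommCoprod_injective _ _ hHK).2
    ⟨H.subtype_injective, K.subtype_injective, by simpa using hdisj⟩
  have hrange : φ.range = H ⊔ K := by simp [φ, MonoidHom.noncommCoprod_range]
  exact ⟨((MonoidHom.ofInjective hinj).trans (MulEquiv.subgroupCongr hrange)).symm⟩

theorem nonempty_zpowers_mulEquiv_zmod (g : G) :
    Nonempty (zpowers g ≃* Multiplicative (ZMod (orderOf g))) :=
  Nat.card_zpowers g ▸ ⟨(zmodCyclicMulEquiv inferInstance).symm⟩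

theorem zpowers_le_centralizer_zpowers {a b : G} (h : Commute a b) :
    zpowers a ≤ centralizer (zpowers b) := by
  rw [zpowers_le, mem_centralizer_iff]
  rintro _ ⟨k, rfl⟩
  exact h.symm.zpow_left k

theorem nonempty_closure_mulEquiv_zmod_prod {a b c : G} (hab : Commute a b) (hac : Commute a c)
    (hbc : Commute b c) (ha : Disjoint (zpowers a) (zpowers b ⊔ zpowers c))
    (hb : Disjoint (zpowers b) (zpowers c)) :
    Nonempty (closure {a, b, c} ≃* Multiplicative (ZMod (orderOf a)) ×
      Multiplicative (ZMod (orderOf b)) × Multiplicative (ZMod (orderOf c))) := by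
  have hclosure : closure {a, b, c} = zpowers a ⊔ (zpowers b ⊔ zpowers c) := by
    simp only [zpowers_eq_closure, ← Subgroup.closure_union, Set.singleton_union]
  obtain ⟨ea⟩ := nonempty_zpowers_mulEquiv_zmod a
  obtain ⟨eb⟩ := nonempty_zpowers_mulEquiv_zmod b
  obtain ⟨ec⟩ := nonempty_zpowers_mulEquiv_zmod c
  have hacomm : zpowers a ≤ centralizer (zpowers b ⊔ zpowers c : Subgroup G) :=
    le_centralizer_iff.2 (sup_le (zpowers_le_centralizer_zpowers hab.symm)
      (zpowers_le_centralizer_zpowers hac.symm))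
  obtain ⟨eabc⟩ := nonempty_sup_mulEquiv_prod hacomm ha
  obtain ⟨ebc⟩ := nonempty_sup_mulEquiv_prod (zpowers_le_centralizer_zpowers hbc) hb
  exact ⟨(MulEquiv.subgroupCongr hclosure).trans <|
    eabc.trans (ea.prodCongr (ebc.trans (eb.prodCongr ec)))⟩

theorem three_le_rank_of_mulEquiv_zmod_prod [Group.FG G] {p a b c : ℕ} (hp : 1 < p) (ha : p ∣ a)
    (hb : p ∣ b) (hc : p ∣ c)
    (e : G ≃* Multiplicative (ZMod a) × Multiplicative (ZMod b) × Multiplicative (ZMod c)) :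
    3 ≤ Group.rank G := by
  have : NeZero p := ⟨by omega⟩
  let reduce {m : ℕ} (h : p ∣ m) : Multiplicative (ZMod m) →* Multiplicative (ZMod p) :=
    AddMonoidHom.toMultiplicative (ZMod.castHom h (ZMod p)).toAddMonoidHom
  have hreduce {m : ℕ} (h : p ∣ m) : Function.Surjective (reduce h) := ZMod.castHom_surjective h
  let f := ((reduce ha).prodMap ((reduce hb).prodMap (reduce hc))).comp e.toMonoidHom
  have hf : Function.Surjective f :=
    ((hreduce ha).prodMap ((hreduce hb).prodMap (hreduce hc))).comp e.surjective
  refine le_trans ?_ (Group.rank_le_of_surjective f hf)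
  have hexp : ∀ g : Multiplicative (ZMod p) × Multiplicative (ZMod p) × Multiplicative (ZMod p),
      g ^ p = 1 := by
    have hpow : ∀ a : Multiplicative (ZMod p), a ^ p = 1 := fun a =>
      ZModModule.char_nsmul_eq_zero p a.toAdd
    exact fun g => Prod.ext (hpow _) (Prod.ext (hpow _) (hpow _))
  have hcard := card_dvd_exponent_pow_rank' _ hexp
  simp only [Nat.card_prod, Nat.card_congr Multiplicative.toAdd, Nat.card_zmod] at hcard
  exact (Nat.pow_dvd_pow_iff_le_right hp).1 ((by ring : p ^ 3 = p * (p * p)) ▸ hcard)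

theorem rank_closure_pair_le_two (u v : G) : Group.rank (closure {u, v}) ≤ 2 := by
  refine (rank_closure_finite_le_nat_card {u, v}).trans ?_
  rw [Nat.card_coe_set_eq]
  exact (Set.ncard_insert_le u {v}).trans (by rw [Set.ncard_singleton])

end

/-- The relators of `⟨x, y, z | [y, x] = z, z central⟩`, shared by `relsGA n` and `relsGB n`; lemmas
on a set of relators containing them apply to both groups. -/
def centralCommutatorRels : Set (FreeGroup (Fin 3)) :=
  { (.of 1)⁻¹ * (.of 0)⁻¹ * .of 1 * .of 0 * (.of 2)⁻¹,
    (.of 2)⁻¹ * (.of 0)⁻¹ * .of 2 * .of 0,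
    (.of 2)⁻¹ * (.of 1)⁻¹ * .of 2 * .of 1 }

namespace centralCommutatorRels

open Subgroup PresentedGroup
open scoped commutatorElement

theorem subset_relsGA {n : ℕ} : centralCommutatorRels ⊆ relsGA n := by
  rintro r (rfl | rfl | rfl) <;> simp [relsGA]

theorem subset_relsGB {n : ℕ} : centralCommutatorRels ⊆ relsGB n := by
  rintro r (rfl | rfl | rfl) <;> simp [relsGB]

variable {rels : Set (FreeGroup (Fin 3))}

theorem of_two_mem_center (h : centralCommutatorRels ⊆ rels) :
    (of 2 : PresentedGroup rels) ∈ center (PresentedGroup rels) := by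
  have hcomm : ∀ i : Fin 3, (of 2)⁻¹ * (of i)⁻¹ * of 2 * of i = (1 : PresentedGroup rels) →
      of 2 * of i = (of i * of 2 : PresentedGroup rels) := fun i hi => by
    rwa [mul_assoc, ← mul_inv_rev, inv_mul_eq_one, eq_comm] at hi
  have hx := hcomm 0 (one_of_mem (h (.inr (.inl rfl))))
  have hy := hcomm 1 (one_of_mem (h (.inr (.inr rfl))))
  rw [center_eq_iInf (closure_range_of rels)]
  simp only [Set.forall_mem_range, mem_iInf, mem_centralizer_singleton_iff, Fin.forall_fin_succ]
  exact ⟨hx, hy, rfl, fun i => i.elim0⟩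

theorem commutatorElement_of_one_of_zero (h : centralCommutatorRels ⊆ rels) :
    ⁅(of 1 : PresentedGroup rels), (of 0 : PresentedGroup rels)⁆ = of 2 := by
  have hrel : (of 1)⁻¹ * (of 0)⁻¹ * of 1 * of 0 * (of 2)⁻¹ = (1 : PresentedGroup rels) :=
    one_of_mem (h (.inl rfl))
  have hyx : of 1 * of 0 = of 0 * of 1 * (of 2 : PresentedGroup rels) := by
    rwa [mul_inv_eq_one, mul_assoc, ← mul_inv_rev, inv_mul_eq_iff_eq_mul] at hrel
  rw [commutatorElement_def, hyx, mem_center_iff.1 (of_two_mem_center h)]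
  group

theorem closure_of_zero_of_one (h : centralCommutatorRels ⊆ rels) :
    closure {of 0, of 1} = (⊤ : Subgroup (PresentedGroup rels)) := by
  have hx : (of 0 : PresentedGroup rels) ∈ closure {of 0, of 1} := subset_closure (by simp)
  have hy : (of 1 : PresentedGroup rels) ∈ closure {of 0, of 1} := subset_closure (by simp)
  have hz : (of 2 : PresentedGroup rels) ∈ closure {of 0, of 1} := by
    rw [← commutatorElement_of_one_of_zero h, commutatorElement_def]
    exact mul_mem (mul_mem (mul_mem hy hx) (inv_mem hy)) (inv_mem hx)
  refine eq_top_iff.2 fun g _ => generated_by rels _ (fun i => ?_) g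
  fin_cases i
  exacts [hx, hy, hz]

theorem isNilpotent (h : centralCommutatorRels ⊆ rels) :
    Group.IsNilpotent (PresentedGroup rels) := by
  refine isNilpotent_of_commutatorElement_mem_center (x := of 1) (y := of 0)
    (Set.pair_comm _ _ ▸ closure_of_zero_of_one h) ?_
  rw [commutatorElement_of_one_of_zero h]
  exact of_two_mem_center h

end centralCommutatorRels

namespace GB

open Subgroup PresentedGroup centralCommutatorRels

variable {n : ℕ}

theorem of_zero_pow : (of 0 : GB n) ^ 2 ^ n = 1 :=
  one_of_mem (.inl rfl)

theorem of_one_sq : (of 1 : GB n) ^ 2 = of 0 ^ 2 :=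
  mk_eq_mk_of_mul_inv_mem (.inr (.inl rfl))

theorem of_one_pow : (of 1 : GB n) ^ 2 ^ (n + 1) = 1 := by
  rw [pow_succ', pow_mul, of_one_sq, ← pow_mul, mul_comm, pow_mul, of_zero_pow, one_pow]

theorem index_eq_two_of_isCoatom {M : Subgroup (GB n)} (hM : IsCoatom M) : M.index = 2 := by
  have : Group.IsNilpotent (GB n) := isNilpotent subset_relsGB
  refine index_eq_of_isCoatom (closure_of_zero_of_one subset_relsGB) ?_ hM
  rintro _ (rfl | rfl)
  exacts [⟨n, of_zero_pow⟩, ⟨n + 1, of_one_pow⟩]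

theorem exists_eq_closure_pair_of_isCoatom {M : Subgroup (GB n)} (hM : IsCoatom M) :
    ∃ u v : GB n, M = closure {u, v} :=
  exists_eq_closure_pair_of_index_two
    (closure_of_zero_of_one subset_relsGB) of_one_sq (index_eq_two_of_isCoatom hM)

end GB

namespace GA

open Subgroup PresentedGroup centralCommutatorRels

variable {n : ℕ}

theorem of_zero_pow : (of 0 : GA n) ^ 2 ^ n = 1 :=
  one_of_mem (.inl rfl)

theorem of_one_sq : (of 1 : GA n) ^ 2 = 1 :=
  one_of_mem (.inr (.inl rfl))

theorem of_two_sq : (of 2 : GA n) ^ 2 = 1 :=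
  one_of_mem (.inr (.inr (.inl rfl)))

theorem of_two_mem_center : (of 2 : GA n) ∈ center (GA n) :=
  centralCommutatorRels.of_two_mem_center subset_relsGA

theorem conj_of_zero : (of 1 * of 0 * (of 1)⁻¹ : GA n) = of 2 * of 0 := by
  rw [← commutatorElement_of_one_of_zero subset_relsGA, commutatorElement_def]
  group

theorem conj_of_one : (of 0 * of 1 * (of 0)⁻¹ : GA n) = (of 2)⁻¹ * of 1 := by
  rw [← commutatorElement_of_one_of_zero subset_relsGA, commutatorElement_def]
  group

theorem commute_of_zero_sq_of_one : Commute (of 0 ^ 2 : GA n) (of 1) := by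
  have hzx : Commute (of 2 : GA n) (of 0) := (mem_center_iff.1 of_two_mem_center _).symm
  rw [commute_iff_eq, eq_comm, ← mul_inv_eq_iff_eq_mul]
  calc (of 1 * of 0 ^ 2 * (of 1)⁻¹ : GA n) = (of 2 * of 0) ^ 2 := by
        rw [← conj_pow, conj_of_zero]
    _ = of 0 ^ 2 := by rw [hzx.mul_pow, of_two_sq, one_mul]

theorem exists_hom {H : Type*} [Group H] {a b c : H} (ha : a ^ 2 ^ n = 1) (hb : b ^ 2 = 1)
    (hc : c ^ 2 = 1) (hba : b⁻¹ * a⁻¹ * b * a = c) (hca : Commute c a) (hcb : Commute c b) :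
    ∃ f : GA n →* H, f (of 0) = a ∧ f (of 1) = b ∧ f (of 2) = c := by
  have hcomm {g : H} (hg : Commute c g) : c⁻¹ * g⁻¹ * c * g = 1 := by
    rw [mul_assoc, hg.eq]; group
  have hrels : ∀ r ∈ relsGA n, FreeGroup.lift ![a, b, c] r = 1 := by
    rintro r (rfl | rfl | rfl | rfl | rfl | rfl)
    exacts [by simpa using ha, by simpa using hb, by simpa using hc,
      by simpa [mul_inv_eq_one] using hba, by simpa using hcomm hca, by simpa using hcomm hcb]
  exact ⟨toGroup hrels, by simp, by simp, by simp⟩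

theorem exists_hom_of_zero {m : ℕ} (hm : m ∣ 2 ^ n) :
    ∃ f : GA n →* Multiplicative (ZMod m),
      f (of 0) = .ofAdd 1 ∧ f (of 1) = 1 ∧ f (of 2) = 1 := by
  refine exists_hom ?_ (one_pow 2) (one_pow 2) (by simp) (.one_left _) (.one_left _)
  rw [← ofAdd_nsmul, nsmul_one, (ZMod.natCast_eq_zero_iff _ _).2 hm, ofAdd_zero]

theorem exists_hom_of_one :
    ∃ f : GA n →* Multiplicative (ZMod 2), f (of 1) = .ofAdd 1 ∧ f (of 2) = 1 := by
  obtain ⟨f, -, hf⟩ := exists_hom (n := n) (a := (1 : Multiplicative (ZMod 2)))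
    (b := .ofAdd 1) (c := 1) (one_pow _) (by decide) (one_pow 2) (by simp)
    (.one_left _) (.one_left _)
  exact ⟨f, hf⟩

theorem of_two_ne_one (hn : n ≠ 0) : (of 2 : GA n) ≠ 1 := by
  obtain ⟨f, -, -, hf⟩ := exists_hom (n := n) (a := (DihedralGroup.sr 0 : DihedralGroup 4))
    (b := .sr 1) (c := .r 2) (orderOf_dvd_iff_pow_eq_one.1 <| by
      rw [DihedralGroup.orderOf_sr]; exact dvd_pow_self 2 hn)
    (by decide) (by decide) (by decide) (commute_iff_eq _ _ |>.2 (by decide))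
    (commute_iff_eq _ _ |>.2 (by decide))
  intro h
  rw [h, map_one] at hf
  revert hf
  decide

theorem disjoint_zpowers_of_zero :
    Disjoint (zpowers (of 0 : GA n)) (zpowers (of 1) ⊔ zpowers (of 2)) := by
  obtain ⟨f, hx, hy, hz⟩ := exists_hom_of_zero (n := n) dvd_rfl
  have hker : zpowers (of 1) ⊔ zpowers (of 2) ≤ f.ker :=
    sup_le (zpowers_le.2 hy) (zpowers_le.2 hz)
  refine (disjoint_zpowers_ker ?_).mono_right hker
  rw [hx, orderOf_ofAdd_eq_addOrderOf, ZMod.addOrderOf_one]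
  exact orderOf_dvd_of_pow_eq_one of_zero_pow

theorem disjoint_zpowers_of_one : Disjoint (zpowers (of 1 : GA n)) (zpowers (of 2)) := by
  obtain ⟨f, hy, hz⟩ := exists_hom_of_one (n := n)
  refine (disjoint_zpowers_ker ?_).mono_right (zpowers_le.2 hz)
  rw [hy, orderOf_ofAdd_eq_addOrderOf, ZMod.addOrderOf_one]
  exact orderOf_dvd_of_pow_eq_one of_one_sq

theorem orderOf_of_zero : orderOf (of 0 : GA n) = 2 ^ n := by
  obtain ⟨f, hx, -⟩ := exists_hom_of_zero (n := n) dvd_rfl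
  refine (orderOf_dvd_of_pow_eq_one of_zero_pow).antisymm ?_
  simpa [hx, orderOf_ofAdd_eq_addOrderOf, ZMod.addOrderOf_one] using orderOf_map_dvd f (of 0)

theorem orderOf_of_zero_sq (hn : n ≠ 0) : orderOf (of 0 ^ 2 : GA n) = 2 ^ (n - 1) := by
  rw [orderOf_pow_of_dvd two_ne_zero (orderOf_of_zero (n := n) ▸ dvd_pow_self 2 hn),
    orderOf_of_zero]
  exact Nat.pow_div (Nat.one_le_iff_ne_zero.2 hn) two_pos

theorem orderOf_of_one : orderOf (of 1 : GA n) = 2 := by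
  obtain ⟨f, hy, -⟩ := exists_hom_of_one (n := n)
  refine orderOf_eq_prime of_one_sq fun h => ?_
  rw [h, map_one] at hy
  revert hy
  decide

theorem orderOf_of_two (hn : n ≠ 0) : orderOf (of 2 : GA n) = 2 :=
  orderOf_eq_prime of_two_sq (of_two_ne_one hn)

theorem index_closure_eq_two (hn : n ≠ 0) :
    (closure {of 0 ^ 2, of 1, of 2} : Subgroup (GA n)).index = 2 := by
  obtain ⟨f, hx, hy, hz⟩ := exists_hom_of_zero (n := n) (dvd_pow_self 2 hn)
  have hx' : f (of 0) ≠ 1 := by rw [hx]; decide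
  have hindex : f.ker.index = 2 := index_ker_eq_of_ne_one hx'
  have hgen : closure {of 1, of 0} = (⊤ : Subgroup (GA n)) :=
    Set.pair_comm _ _ ▸ closure_of_zero_of_one subset_relsGA
  have hker := eq_closure_of_index_two hgen hindex hy hx'
  suffices h : f.ker = closure {of 0 ^ 2, of 1, of 2} from h ▸ hindex
  have hconj : of 0 * of 1 * (of 0)⁻¹ ∈ closure {of 0 ^ 2, of 1, (of 2 : GA n)} := by
    rw [conj_of_one]
    exact mul_mem (inv_mem (subset_closure (by simp))) (subset_closure (by simp))
  refine le_antisymm ?_ ?_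
  · rw [hker, closure_le]
    rintro _ (rfl | rfl | rfl)
    exacts [subset_closure (by simp), hconj, subset_closure (by simp)]
  · rw [closure_le]
    rintro _ (rfl | rfl | rfl)
    exacts [sq_mem_of_index_two hindex _, hy, hz]

theorem nonempty_closure_mulEquiv (hn : n ≠ 0) :
    Nonempty ((closure {of 0 ^ 2, of 1, of 2} : Subgroup (GA n)) ≃*
      Multiplicative (ZMod (2 ^ (n - 1))) × Multiplicative (ZMod 2) × Multiplicative (ZMod 2)) := by
  have hz (g : GA n) : Commute g (of 2) := mem_center_iff.1 of_two_mem_center g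
  have hx : zpowers (of 0 ^ 2) ≤ zpowers (of 0 : GA n) :=
    zpowers_le.2 (pow_mem (mem_zpowers _) 2)
  have he := nonempty_closure_mulEquiv_zmod_prod commute_of_zero_sq_of_one (hz _) (hz _)
    (disjoint_zpowers_of_zero.mono_left hx) disjoint_zpowers_of_one
  rwa [orderOf_of_zero_sq hn, orderOf_of_one, orderOf_of_two hn] at he

theorem exists_isCoatom_mulEquiv (hn : n ≠ 0) :
    ∃ M : Subgroup (GA n), IsCoatom M ∧ Nonempty (M ≃* (Multiplicative (ZMod (2 ^ (n - 1))) ×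
      Multiplicative (ZMod 2) × Multiplicative (ZMod 2))) :=
  ⟨_, isCoatom_of_prime_index ((index_closure_eq_two hn).symm ▸ Nat.prime_two),
    nonempty_closure_mulEquiv hn⟩

end GA

/-- For n ≥ 2 (and with the ℓ = 1 relations making z central), the group
G_⚀(n,1,1) has a maximal subgroup isomorphic to C_{2^{n-1}} × C_2 × C_2, whereas every
maximal subgroup of G_⚁(n,1,1) is two-generated; in particular the two groups are not
isomorphic. -/
theorem stmt16 (n : ℕ) (hn : 2 ≤ n) :
    (∃ M : Subgroup (GA n), IsCoatom M ∧
      Nonempty (M ≃* (Multiplicative (ZMod (2 ^ (n - 1))) × Multiplicative (ZMod 2) ×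
        Multiplicative (ZMod 2)))) ∧
    (∀ M : Subgroup (GB n), IsCoatom M → ∃ u v : GB n, M = Subgroup.closure {u, v}) ∧
    IsEmpty (GA n ≃* GB n) := by
  have hn0 : n ≠ 0 := by omega
  refine ⟨GA.exists_isCoatom_mulEquiv hn0, fun M => GB.exists_eq_closure_pair_of_isCoatom,
    ⟨fun e => ?_⟩⟩
  obtain ⟨M, hM, ⟨ι⟩⟩ := GA.exists_isCoatom_mulEquiv hn0
  obtain ⟨u, v, huv⟩ := GB.exists_eq_closure_pair_of_isCoatom
    ((OrderIso.isCoatom_iff e.mapSubgroup M).2 hM)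
  let eM : Subgroup.closure {u, v} ≃* M :=
    (MulEquiv.subgroupCongr huv).symm.trans (e.subgroupMap M).symm
  have hrank : 3 ≤ Group.rank (Subgroup.closure {u, v}) :=
    three_le_rank_of_mulEquiv_zmod_prod one_lt_two (dvd_pow_self 2 (by omega)) dvd_rfl dvd_rfl
      (eM.trans ι)
  have := rank_closure_pair_le_two u v
  omega
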